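/- arXiv:math/0703391 — 2 statements merged into one kernel-verified Lean document; each statement's English description precedes it below -/
import Mathlib

section
/- The only solutions in positive integers (x, y) of the Diophantine equation x² = 2y⁴ − 1 are (x, y) = (1, 1) and (x, y) = (239, 13). -/
/-- The positive solutions of `x ^ 2 - 2 * y ^ 2 = -1`, in increasing order. -/
def negPell : ℕ → ℤ × ℤ
  | 0 => (1, 1)
  | n + 1 => (3 * (negPell n).1 + 4 * (negPell n).2, 2 * (negPell n).1 + 3 * (negPell n).2)

lemma exists_negPell_eq (Y : ℕ) : ∀ x : ℤ, 0 < x → 0 < Y → x ^ 2 = 2 * (Y : ℤ) ^ 2 - 1 →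
    ∃ n, negPell n = (x, (Y : ℤ)) := by
  induction Y using Nat.strong_induction_on with
  | _ Y ih =>
    intro x hx hY h
    rcases Nat.lt_or_ge Y 3 with h3 | h3
    · interval_cases Y
      · exact ⟨0, by
          have : x = 1 := by push_cast at h; nlinarith
          simp [negPell, this]⟩
      · exfalso
        have : x < 3 := by push_cast at h; nlinarith
        interval_cases x <;> norm_num at h
    · have h3 : (3 : ℤ) ≤ Y := by exact_mod_cast h3
      have h1 : 0 < 3 * x - 4 * Y := by nlinarith
      have h2 : 0 < 3 * (Y : ℤ) - 2 * x := by nlinarith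
      have h4 : (Y : ℤ) < x := by nlinarith
      have hc : ((3 * (Y : ℤ) - 2 * x).toNat : ℤ) = 3 * (Y : ℤ) - 2 * x := Int.toNat_of_nonneg h2.le
      obtain ⟨n, hn⟩ := ih (3 * (Y : ℤ) - 2 * x).toNat (by omega) (3 * x - 4 * Y) h1 (by omega)
        (by rw [hc]; linear_combination h)
      refine ⟨n + 1, ?_⟩
      rw [hc] at hn
      simp only [negPell, hn, Prod.mk.injEq]
      constructor <;> ring

lemma five_pow_le_negPell (n : ℕ) : 5 ^ n ≤ (negPell n).2 ∧ (negPell n).2 ≤ (negPell n).1 := by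
  induction n with
  | zero => simp [negPell]
  | succ n ih =>
    simp only [negPell, pow_succ]
    have : (0 : ℤ) < 5 ^ n := by positivity
    constructor <;> linarith

lemma isSquare_negPell {n : ℕ} (hn : n < 39) (h : IsSquare (negPell n).2) : n = 0 ∨ n = 3 := by
  interval_cases n <;> first | exact Or.inl rfl | exact Or.inr rfl | (norm_num [negPell] at h)

/-- A solution of `x ^ 2 = 2 * y ^ 4 - 1` below an explicit bound is one of the two known ones. -/
lemma eq_of_lt {x y : ℤ} (hx : 0 < x) (hy : 0 < y) (hb : y < 2 * 10 ^ 13)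
    (h : x ^ 2 = 2 * y ^ 4 - 1) : (x = 1 ∧ y = 1) ∨ (x = 239 ∧ y = 13) := by
  have hc : ((y ^ 2).toNat : ℤ) = y ^ 2 := Int.toNat_of_nonneg (by positivity)
  obtain ⟨n, hn⟩ := exists_negPell_eq (y ^ 2).toNat x hx (by have := pow_pos hy 2; omega)
    (by rw [hc, h]; ring)
  rw [hc] at hn
  have hlt : n < 39 := by
    by_contra! hge
    have h1 := (five_pow_le_negPell n).1
    have h2 : (5 : ℤ) ^ 39 ≤ 5 ^ n := pow_le_pow_right₀ (by norm_num) hge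
    have h3 : y ^ 2 < (2 * 10 ^ 13) ^ 2 := by gcongr
    simp only [hn] at h1
    norm_num at h2 h3
    linarith
  rcases isSquare_negPell hlt (by rw [hn]; exact ⟨y, by ring⟩) with rfl | rfl
  · simp only [negPell, Prod.mk.injEq] at hn
    left; constructor <;> nlinarith
  · norm_num [negPell] at hn
    right; constructor <;> nlinarith

lemma gaussianInt_isUnit {u : GaussianInt} (hu : IsUnit u) :
    u = ⟨1, 0⟩ ∨ u = ⟨-1, 0⟩ ∨ u = ⟨0, 1⟩ ∨ u = ⟨0, -1⟩ := by
  have h := (Zsqrtd.norm_eq_one_iff' (by norm_num) u).mpr hu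
  obtain ⟨a, b⟩ := u
  rw [Zsqrtd.norm_def] at h
  simp only at h
  have ha : a ^ 2 ≤ 1 := by nlinarith [sq_nonneg b]
  have hb : b ^ 2 ≤ 1 := by nlinarith [sq_nonneg a]
  have := abs_le.mp ((sq_le_one_iff_abs_le_one a).mp ha)
  have := abs_le.mp ((sq_le_one_iff_abs_le_one b).mp hb)
  have ha : a = -1 ∨ a = 0 ∨ a = 1 := by omega
  have hb : b = -1 ∨ b = 0 ∨ b = 1 := by omega
  rcases ha with rfl | rfl | rfl <;> rcases hb with rfl | rfl | rfl <;> simp_all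

/-- Factoring `x + i` over the Gaussian integers turns the equation into a quartic Thue equation. -/
lemma exists_thue {x y : ℤ} (hy : 0 < y) (h : x ^ 2 = 2 * y ^ 4 - 1) :
    ∃ p q : ℤ, p ^ 2 + q ^ 2 = y ∧
      |p ^ 4 + 4 * p ^ 3 * q - 6 * p ^ 2 * q ^ 2 - 4 * p * q ^ 3 + q ^ 4| = 1 := by
  have hx : Odd x := by
    have : Odd (x ^ 2) := ⟨y ^ 4 - 1, by rw [h]; ring⟩
    exact (Int.odd_pow.mp this).resolve_right (by norm_num)
  have hyo : Odd (y ^ 4) := by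
    obtain ⟨k, rfl⟩ := hx
    exact ⟨k ^ 2 + k, by nlinarith⟩
  obtain ⟨m, hm⟩ := hyo
  obtain ⟨k, rfl⟩ := hx
  have hk : (k + 1) ^ 2 + k ^ 2 = y ^ 4 := by nlinarith
  have hmul : (⟨k + 1, -k⟩ : GaussianInt) * ⟨k + 1, k⟩ = (⟨y, 0⟩ : GaussianInt) ^ 4 := by
    have : (⟨y, 0⟩ : GaussianInt) = (y : GaussianInt) := by ext <;> simp
    rw [this, ← Int.cast_pow]
    generalize y ^ 4 = t at hk
    ext <;> simp <;> linarith
  have hcop : IsCoprime (⟨k + 1, -k⟩ : GaussianInt) ⟨k + 1, k⟩ := by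
    refine ⟨⟨k + 1, k⟩ + ⟨0, m⟩ * ⟨1, 1⟩, -⟨0, m⟩ * ⟨1, -1⟩, ?_⟩
    ext <;> simp <;> nlinarith
  obtain ⟨d, u, hd⟩ := exists_associated_pow_of_mul_eq_pow' hcop hmul
  have hnorm : (d.norm) ^ 4 = y ^ 4 := by
    have h1 := congrArg Zsqrtd.norm hd
    rw [Zsqrtd.norm_mul, (Zsqrtd.norm_eq_one_iff' (by norm_num) _).mpr u.isUnit, mul_one] at h1
    have h2 : (d ^ 4).norm = d.norm ^ 4 := map_pow Zsqrtd.normMonoidHom d 4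
    rw [h2, Zsqrtd.norm_def (⟨k + 1, -k⟩ : GaussianInt)] at h1
    simp only at h1
    nlinarith
  have hny : d.norm = y :=
    (pow_left_inj₀ (GaussianInt.norm_nonneg d) hy.le (by norm_num)).mp hnorm
  obtain ⟨p, q⟩ := d
  have hpq : p ^ 2 + q ^ 2 = y := by
    rw [← hny, Zsqrtd.norm_def]; ring
  rcases gaussianInt_isUnit u.isUnit with hu | hu | hu | hu
  all_goals
    rw [hu] at hd
    have hre := congrArg Zsqrtd.re hd
    have him := congrArg Zsqrtd.im hd
    simp [pow_succ] at hre him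
  · exact ⟨p, q, hpq, (abs_eq one_pos.le).mpr (by left; linarith)⟩
  · exact ⟨p, q, hpq, (abs_eq one_pos.le).mpr (by right; linarith)⟩
  · exact ⟨p, -q, by rw [← hpq]; ring, (abs_eq one_pos.le).mpr (by left; linarith)⟩
  · exact ⟨p, -q, by rw [← hpq]; ring, (abs_eq one_pos.le).mpr (by right; linarith)⟩

open Finset

/-- Up to normalisation, the diagonal Padé approximants of the fourth root at `239 + i`: the
argument of `padeNum n` tends rapidly to `arg (239 + i) / 4`. -/
noncomputable def padeNum : ℕ → ℂ
  | 0 => 1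
  | 1 => 239 + Complex.I / 4
  | n + 2 => (2 * n + 3) * 239 * padeNum (n + 1) + ((n + 1) ^ 2 - 1 / 16) * padeNum n

lemma factorial_dvd_two_pow_mul_prod (m : ℕ) (b : ℤ) :
    (m.factorial : ℤ) ∣ 2 ^ m * ∏ t ∈ range m, (b + 4 * t) := by
  obtain ⟨v, o, ho, hmo⟩ := Nat.exists_eq_two_pow_mul_odd m.factorial_ne_zero
  have hv : v ≤ m := by
    have h1 : (2 : ℕ) ^ v ∣ m.factorial := ⟨o, hmo⟩
    rcases Nat.eq_zero_or_pos m with rfl | hm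
    · have := Nat.le_of_dvd (by simp) h1
      by_contra! hlt
      have := Nat.one_lt_two_pow (by omega : v ≠ 0)
      simp at *
      omega
    · have h2 := Nat.emultiplicity_two_factorial_lt hm.ne'
      have h3 := le_emultiplicity_of_pow_dvd h1
      exact_mod_cast (h3.trans_lt h2).le
  have hcop : IsCoprime (4 : ℤ) (o : ℤ) := by
    rw [show (4 : ℤ) = 2 ^ 2 by norm_num]
    apply IsCoprime.pow_left
    exact_mod_cast (Nat.isCoprime_iff_coprime.mpr (Nat.coprime_two_left.mpr ho))
  obtain ⟨u, w, huw⟩ := hcop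
  have hasc : (m.factorial : ℤ) ∣ ∏ t ∈ range m, (u * b + t) := by
    have h := Ring.factorial_nsmul_multichoose_eq_ascPochhammer (u * b) m
    rw [nsmul_eq_mul, Polynomial.ascPochhammer_smeval_eq_eval] at h
    have hprod : ∀ k, (ascPochhammer ℤ k).eval (u * b) = ∏ t ∈ range k, (u * b + t) := by
      intro k
      induction k with
      | zero => simp
      | succ k ih => rw [ascPochhammer_succ_eval, ih, prod_range_succ]
    exact ⟨_, by rw [← hprod, h]⟩
  have ho' : (o : ℤ) ∣ ∏ t ∈ range m, (b + 4 * t) := by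
    have h1 : (o : ℤ) ∣ ∏ t ∈ range m, (4 * (u * b + t)) := by
      rw [prod_mul_distrib]
      exact Dvd.dvd.mul_left ((Dvd.intro_left _ (by rw [hmo]; push_cast; rfl)).trans hasc) _
    have h2 : ∏ t ∈ range m, (b + 4 * (t : ℤ)) ≡ ∏ t ∈ range m, (4 * (u * b + t)) [ZMOD o] := by
      apply Int.ModEq.prod
      intro t _
      exact (Int.modEq_iff_dvd.mpr ⟨-w * b, by linear_combination b * huw⟩)
    exact (Int.modEq_zero_iff_dvd.mp (h2.trans (Int.modEq_zero_iff_dvd.mpr h1)))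
  rw [hmo]
  push_cast
  exact mul_dvd_mul (pow_dvd_pow 2 hv) ho'

/-- Coefficients of the diagonal Padé approximants of the fourth root. -/
noncomputable def padeCoeff (n j : ℕ) : ℂ :=
  if j ≤ n then (n + j).choose n * (∏ t ∈ range (n - j), ((j : ℂ) + 3 / 4 + t)) / (n - j).factorial
  else 0

lemma padeCoeff_add (j m : ℕ) : padeCoeff (j + m) j =
    (2 * j + m).factorial / ((j + m).factorial * j.factorial * m.factorial) *
      ∏ t ∈ range m, ((j : ℂ) + 3 / 4 + t) := by
  have h := Nat.add_choose_mul_factorial_mul_factorial (j + m) j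
  have h' : (((j + m + j).choose (j + m) : ℕ) : ℂ) * (j + m).factorial * j.factorial
      = (2 * j + m).factorial := by
    rw [show 2 * j + m = j + m + j by ring, Nat.choose_symm_add]; exact_mod_cast h
  have h1 : ((j + m).factorial : ℂ) ≠ 0 := by exact_mod_cast (j + m).factorial_ne_zero
  have h2 : (j.factorial : ℂ) ≠ 0 := by exact_mod_cast j.factorial_ne_zero
  have h3 : (m.factorial : ℂ) ≠ 0 := by exact_mod_cast m.factorial_ne_zero
  simp only [padeCoeff, Nat.le_add_right, if_true, Nat.add_sub_cancel_left]
  rw [← h']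
  field_simp

lemma padeCoeff_of_lt {n j : ℕ} (h : n < j) : padeCoeff n j = 0 := by
  simp [padeCoeff, h]

lemma padeCoeff_succ_succ (n j : ℕ) : ((n : ℂ) + 1) * (n + 2) * padeCoeff (n + 2) (j + 1) =
    (2 * n + 3) * (n + 1) * (2 * padeCoeff (n + 1) j + padeCoeff (n + 1) (j + 1)) -
      ((n + 1) ^ 2 - 1 / 16) * padeCoeff n (j + 1) := by
  rcases lt_trichotomy j n with h | rfl | h
  · obtain ⟨m, rfl⟩ := Nat.exists_eq_add_of_lt h
    have e0 := padeCoeff_add (j + 1) m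
    have e1 := padeCoeff_add (j + 1) (m + 1)
    have e2 := padeCoeff_add (j + 1) (m + 2)
    have e3 := padeCoeff_add j (m + 2)
    rw [prod_range_succ'] at e3
    rw [show j + 1 + m = j + m + 1 by ring, show 2 * (j + 1) + m = 2 * j + m + 2 by ring] at e0
    rw [show j + 1 + (m + 1) = j + m + 1 + 1 by ring,
      show 2 * (j + 1) + (m + 1) = 2 * j + m + 2 + 1 by ring] at e1
    rw [show j + 1 + (m + 2) = j + m + 1 + 2 by ring,
      show 2 * (j + 1) + (m + 2) = 2 * j + m + 2 + 2 by ring] at e2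
    rw [show j + (m + 2) = j + m + 1 + 1 by ring,
      show 2 * j + (m + 2) = 2 * j + m + 2 by ring] at e3
    rw [e0, e1, e2, e3]
    have hp : ∏ t ∈ range (m + 1), ((j : ℂ) + 3 / 4 + ((t + 1 : ℕ) : ℂ)) =
        (∏ t ∈ range m, (((j + 1 : ℕ) : ℂ) + 3 / 4 + t)) * (j + 1 + 3 / 4 + m) := by
      rw [prod_range_succ]
      congr 1
      · exact prod_congr rfl fun t _ => by push_cast; ring
      · push_cast; ring
    rw [hp]
    have h1 : (m.factorial : ℂ) ≠ 0 := by exact_mod_cast m.factorial_ne_zero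
    have h2 : (j.factorial : ℂ) ≠ 0 := by exact_mod_cast j.factorial_ne_zero
    have h3 : ((j + m + 1).factorial : ℂ) ≠ 0 := by exact_mod_cast (j + m + 1).factorial_ne_zero
    have h4 : (j : ℂ) + 1 ≠ 0 := by exact_mod_cast j.succ_ne_zero
    have h5 : (m : ℂ) + 1 ≠ 0 := by exact_mod_cast m.succ_ne_zero
    have h6 : (m : ℂ) + 1 + 1 ≠ 0 := by exact_mod_cast (m + 1).succ_ne_zero
    have h7 : (j : ℂ) + m + 1 + 1 ≠ 0 := by exact_mod_cast (j + m + 1).succ_ne_zero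
    have h8 : (j : ℂ) + m + 1 + 1 + 1 ≠ 0 := by exact_mod_cast (j + m + 1 + 1).succ_ne_zero
    simp only [prod_range_succ, Nat.factorial_succ (j + m + 1), Nat.factorial_succ (j + m + 1 + 1),
      Nat.factorial_succ (2 * j + m + 2), Nat.factorial_succ (2 * j + m + 2 + 1),
      Nat.factorial_succ j, Nat.factorial_succ m, Nat.factorial_succ (m + 1), Nat.cast_mul]
    generalize ∏ t ∈ range m, (((j + 1 : ℕ) : ℂ) + 3 / 4 + t) = P
    generalize ((2 * j + m + 2).factorial : ℂ) = F
    push_cast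
    field_simp
    ring
  · have e1 := padeCoeff_add (j + 1) 0
    have e2 := padeCoeff_add (j + 1) 1
    have e3 := padeCoeff_add j 1
    rw [padeCoeff_of_lt (Nat.lt_succ_self j)]
    rw [show 2 * (j + 1) + 0 = 2 * j + 1 + 1 by ring] at e1
    rw [show 2 * (j + 1) + 1 = 2 * j + 1 + 2 by ring] at e2
    rw [e2, e3, show j + 1 = j + 1 + 0 by ring, e1]
    have h2 : (j.factorial : ℂ) ≠ 0 := by exact_mod_cast j.factorial_ne_zero
    have h4 : (j : ℂ) + 1 ≠ 0 := by exact_mod_cast j.succ_ne_zero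
    have h5 : (j : ℂ) + 1 + 1 ≠ 0 := by exact_mod_cast (j + 1).succ_ne_zero
    simp only [prod_range_succ, prod_range_zero, Nat.factorial_succ, Nat.factorial_zero,
      Nat.cast_mul, add_zero]
    generalize ((2 * j).factorial : ℂ) = F
    push_cast
    field_simp
    ring
  · rcases Nat.lt_or_ge (n + 1) j with h' | h'
    · rw [padeCoeff_of_lt (by omega), padeCoeff_of_lt (by omega), padeCoeff_of_lt (by omega),
        padeCoeff_of_lt (by omega)]
      ring
    · obtain rfl : j = n + 1 := by omega
      rw [padeCoeff_of_lt (by omega : n + 1 < n + 1 + 1),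
        padeCoeff_of_lt (by omega : n < n + 1 + 1)]
      have e1 := padeCoeff_add (n + 1) 0
      have e2 := padeCoeff_add (n + 1 + 1) 0
      rw [add_zero, add_zero, show 2 * (n + 1) = 2 * n + 1 + 1 by ring] at e1
      rw [add_zero, add_zero, show 2 * (n + 1 + 1) = 2 * n + 1 + 1 + 1 + 1 by ring] at e2
      rw [show n + 2 = n + 1 + 1 by ring, e1, e2]
      have h2 : (n.factorial : ℂ) ≠ 0 := by exact_mod_cast n.factorial_ne_zero
      have h4 : (n : ℂ) + 1 ≠ 0 := by exact_mod_cast n.succ_ne_zero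
      have h5 : (n : ℂ) + 1 + 1 ≠ 0 := by exact_mod_cast (n + 1).succ_ne_zero
      simp only [prod_range_zero, Nat.factorial_succ, Nat.factorial_zero, Nat.cast_mul]
      generalize ((2 * n).factorial : ℂ) = F
      push_cast
      field_simp
      ring

lemma padeCoeff_zero_succ (n : ℕ) : ((n : ℂ) + 1) * (n + 2) * padeCoeff (n + 2) 0 =
    (2 * n + 3) * (n + 1) * padeCoeff (n + 1) 0 - ((n + 1) ^ 2 - 1 / 16) * padeCoeff n 0 := by
  have h0 := padeCoeff_add 0 n
  have h1 := padeCoeff_add 0 (n + 1)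
  have h2 := padeCoeff_add 0 (n + 2)
  simp only [zero_add, mul_zero] at h0 h1 h2
  rw [h0, h1, h2]
  have h3 : (n.factorial : ℂ) ≠ 0 := by exact_mod_cast n.factorial_ne_zero
  have h4 : (n : ℂ) + 1 ≠ 0 := by exact_mod_cast n.succ_ne_zero
  have h5 : (n : ℂ) + 1 + 1 ≠ 0 := by exact_mod_cast (n + 1).succ_ne_zero
  simp only [prod_range_succ, Nat.factorial_succ, Nat.cast_mul]
  push_cast
  field_simp
  ring

lemma padeNum_eq_sum (n : ℕ) : 2 ^ n * padeNum n = n.factorial *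
    ∑ j ∈ range (n + 1), padeCoeff n j * (239 + Complex.I) ^ j * (-2 * Complex.I) ^ (n - j) := by
  induction n using Nat.twoStepInduction with
  | zero => simp [padeNum, padeCoeff]
  | one =>
    simp [padeNum, padeCoeff, sum_range_succ]
    ring
  | more n ih0 ih1 =>
    set a : ℂ := 239 + Complex.I with ha
    set f : ℂ := -2 * Complex.I with hf
    have hf2 : f ^ 2 = -4 := by rw [hf, mul_pow, Complex.I_sq]; norm_num
    have haf : 2 * a + f = 478 := by rw [ha, hf]; ring
    have key : ((n : ℂ) + 1) * (n + 2) *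
        ∑ j ∈ range (n + 3), padeCoeff (n + 2) j * a ^ j * f ^ (n + 2 - j) =
        (2 * n + 3) * (n + 1) * (2 * a + f) *
          ∑ j ∈ range (n + 2), padeCoeff (n + 1) j * a ^ j * f ^ (n + 1 - j) -
        ((n + 1) ^ 2 - 1 / 16) * f ^ 2 *
          ∑ j ∈ range (n + 1), padeCoeff n j * a ^ j * f ^ (n - j) := by
      have s1 : f * ∑ j ∈ range (n + 2), padeCoeff (n + 1) j * a ^ j * f ^ (n + 1 - j) =
          ∑ j ∈ range (n + 3), padeCoeff (n + 1) j * a ^ j * f ^ (n + 2 - j) := by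
        rw [sum_range_succ _ (n + 2), padeCoeff_of_lt (by omega : n + 1 < n + 2), mul_sum]
        simp only [zero_mul, add_zero]
        refine sum_congr rfl fun j hj => ?_
        rw [show n + 2 - j = n + 1 - j + 1 by have := mem_range.mp hj; omega, pow_succ]
        ring
      have s0 : f ^ 2 * ∑ j ∈ range (n + 1), padeCoeff n j * a ^ j * f ^ (n - j) =
          ∑ j ∈ range (n + 3), padeCoeff n j * a ^ j * f ^ (n + 2 - j) := by
        rw [sum_range_succ _ (n + 2), sum_range_succ _ (n + 1),
          padeCoeff_of_lt (by omega : n < n + 2), padeCoeff_of_lt (by omega : n < n + 1), mul_sum]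
        simp only [zero_mul, add_zero]
        refine sum_congr rfl fun j hj => ?_
        rw [show n + 2 - j = n - j + 2 by have := mem_range.mp hj; omega, pow_add]
        ring
      have s2 : a * ∑ j ∈ range (n + 2), padeCoeff (n + 1) j * a ^ j * f ^ (n + 1 - j) =
          ∑ j ∈ range (n + 2), padeCoeff (n + 1) j * a ^ (j + 1) * f ^ (n + 2 - (j + 1)) := by
        rw [mul_sum]
        refine sum_congr rfl fun j _ => ?_
        rw [show n + 2 - (j + 1) = n + 1 - j by omega]
        ring
      rw [mul_assoc _ (f ^ 2), s0, mul_assoc _ (2 * a + f), add_mul (2 * a) f, s1,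
        mul_assoc 2 a, s2, sum_range_succ', sum_range_succ' _ (n + 2), sum_range_succ' _ (n + 2)]
      have hsum : ((n : ℂ) + 1) * (n + 2) * ∑ j ∈ range (n + 2),
            padeCoeff (n + 2) (j + 1) * a ^ (j + 1) * f ^ (n + 2 - (j + 1)) =
          (2 * n + 3) * (n + 1) * 2 * ∑ j ∈ range (n + 2),
            padeCoeff (n + 1) j * a ^ (j + 1) * f ^ (n + 2 - (j + 1)) +
          (2 * n + 3) * (n + 1) * ∑ j ∈ range (n + 2),
            padeCoeff (n + 1) (j + 1) * a ^ (j + 1) * f ^ (n + 2 - (j + 1)) -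
          ((n + 1) ^ 2 - 1 / 16) * ∑ j ∈ range (n + 2),
            padeCoeff n (j + 1) * a ^ (j + 1) * f ^ (n + 2 - (j + 1)) := by
        rw [mul_sum, mul_sum, mul_sum, mul_sum, ← sum_add_distrib, ← sum_sub_distrib]
        refine sum_congr rfl fun j _ => ?_
        linear_combination (a ^ (j + 1) * f ^ (n + 2 - (j + 1))) * padeCoeff_succ_succ n j
      linear_combination hsum + (a ^ 0 * f ^ (n + 2 - 0)) * padeCoeff_zero_succ n
    rw [hf2, haf] at key
    rw [Nat.factorial_succ, Nat.cast_mul] at ih1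
    rw [Nat.factorial_succ, Nat.factorial_succ, Nat.cast_mul, Nat.cast_mul]
    simp only [padeNum]
    push_cast at ih1 ⊢
    linear_combination (2 * 239 * (2 * (n : ℂ) + 3)) * ih1 +
      4 * (((n : ℂ) + 1) ^ 2 - 1 / 16) * ih0 - (n.factorial : ℂ) * key

lemma padeCoeff_integral {n j : ℕ} (h : j ≤ n) : ∃ c : ℤ, 8 ^ (n - j) * padeCoeff n j = c := by
  obtain ⟨m, rfl⟩ := Nat.exists_eq_add_of_le h
  obtain ⟨c, hc⟩ := factorial_dvd_two_pow_mul_prod m (4 * j + 3)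
  refine ⟨(j + m + j).choose (j + m) * c, ?_⟩
  have hc' : (2 : ℂ) ^ m * ∏ t ∈ range m, ((4 * j + 3 : ℂ) + 4 * t) = m.factorial * c := by
    exact_mod_cast congrArg (Int.cast : ℤ → ℂ) hc
  have h1 : (m.factorial : ℂ) ≠ 0 := by exact_mod_cast m.factorial_ne_zero
  have hp : (4 : ℂ) ^ m * ∏ t ∈ range m, ((j : ℂ) + 3 / 4 + t) =
      ∏ t ∈ range m, ((4 * j + 3 : ℂ) + 4 * t) := by
    conv_lhs => rw [← card_range m, ← prod_const, card_range, ← prod_mul_distrib]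
    exact prod_congr rfl fun t _ => by ring
  simp only [padeCoeff, Nat.le_add_right, if_true, Nat.add_sub_cancel_left]
  rw [← hp] at hc'
  rw [show (8 : ℂ) = 2 * 4 by norm_num, mul_pow]
  generalize ∏ t ∈ range m, ((j : ℂ) + 3 / 4 + t) = P at hc'
  push_cast
  field_simp
  linear_combination (((j + m + j).choose (j + m) : ℕ) : ℂ) * hc'

lemma padeNum_integral (n : ℕ) :
    ∃ w : GaussianInt, (w : ℂ) = 8 ^ n * padeNum n / n.factorial := by
  have hterm : ∀ j ∈ range (n + 1), ∃ w : GaussianInt,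
      (w : ℂ) = 4 ^ n * (padeCoeff n j * (239 + Complex.I) ^ j * (-2 * Complex.I) ^ (n - j)) := by
    intro j hj
    have hj : j ≤ n := Nat.lt_succ_iff.mp (mem_range.mp hj)
    obtain ⟨c, hc⟩ := padeCoeff_integral hj
    refine ⟨((4 : ℤ) : GaussianInt) ^ j * (c : GaussianInt) * ⟨239, 1⟩ ^ j * ⟨0, -1⟩ ^ (n - j), ?_⟩
    simp only [map_mul, map_pow, map_intCast, GaussianInt.toComplex_def', ← hc]
    obtain ⟨m, rfl⟩ := Nat.exists_eq_add_of_le hj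
    rw [Nat.add_sub_cancel_left, show -2 * Complex.I = 2 * -Complex.I by ring, mul_pow 2,
      show (8 : ℂ) = 4 * 2 by norm_num, mul_pow 4]
    simp
    ring
  choose! w hw using hterm
  refine ⟨∑ j ∈ range (n + 1), w j, ?_⟩
  have h1 : (n.factorial : ℂ) ≠ 0 := by exact_mod_cast n.factorial_ne_zero
  rw [map_sum, sum_congr rfl hw, ← mul_sum, eq_div_iff h1, show (8 : ℂ) = 4 * 2 by norm_num,
    mul_pow, mul_assoc, mul_assoc, padeNum_eq_sum, mul_comm (n.factorial : ℂ)]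

lemma norm_padeNum_le (n : ℕ) : ‖padeNum n‖ ≤ n.factorial * 479 ^ n := by
  induction n using Nat.twoStepInduction with
  | zero => simp [padeNum]
  | one =>
    have h := norm_add_le (239 : ℂ) (Complex.I / 4)
    simp [padeNum] at h ⊢
    linarith
  | more n ih0 ih1 =>
    have h1 : ‖(2 * n + 3 : ℂ) * 239‖ = (2 * n + 3) * 239 := by
      have : (2 * n + 3 : ℂ) * 239 = (((2 * n + 3) * 239 : ℕ) : ℂ) := by push_cast; ring
      rw [this, Complex.norm_natCast]; push_cast; ring
    have h2 : ‖((n : ℂ) + 1) ^ 2 - 1 / 16‖ ≤ (n + 1) ^ 2 := by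
      have : ((n : ℂ) + 1) ^ 2 - 1 / 16 = (((n + 1) ^ 2 - 1 / 16 : ℝ) : ℂ) := by push_cast; ring
      rw [this, Complex.norm_real, Real.norm_eq_abs,
        abs_of_nonneg (by nlinarith [n.cast_nonneg (α := ℝ)])]
      linarith
    calc ‖padeNum (n + 2)‖
        ≤ ‖(2 * n + 3 : ℂ) * 239 * padeNum (n + 1)‖ + ‖(((n : ℂ) + 1) ^ 2 - 1 / 16) * padeNum n‖ :=
          norm_add_le _ _
      _ ≤ (2 * n + 3) * 239 * ((n + 1).factorial * 479 ^ (n + 1)) +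
          (n + 1) ^ 2 * (n.factorial * 479 ^ n) := by
          rw [norm_mul, norm_mul _ (padeNum n), h1]
          gcongr
      _ ≤ (n + 2).factorial * 479 ^ (n + 2) := by
          simp only [Nat.factorial_succ, pow_succ]
          push_cast
          have : (0 : ℝ) ≤ n.factorial * 479 ^ n := by positivity
          have hn : (0 : ℝ) ≤ n := n.cast_nonneg
          have : 0 ≤ ((n : ℝ) + 1) * (n.factorial * 479 ^ n) *
            ((n + 2) * 479 * 479 - (2 * n + 3) * 239 * 479 - (n + 1)) := by
            apply mul_nonneg (by positivity)
            nlinarith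
          nlinarith

lemma im_padeNum_succ_mul_conj_ne_zero (n : ℕ) :
    (padeNum (n + 1) * (starRingEnd ℂ) (padeNum n)).im ≠ 0 := by
  induction n with
  | zero => simp [padeNum]
  | succ n ih =>
    have h : (padeNum (n + 2) * (starRingEnd ℂ) (padeNum (n + 1))).im =
        -(((n : ℝ) + 1) ^ 2 - 1 / 16) * (padeNum (n + 1) * (starRingEnd ℂ) (padeNum n)).im := by
      have e : padeNum (n + 2) = (((2 * n + 3) * 239 : ℝ) : ℂ) * padeNum (n + 1) +
          ((((n + 1) ^ 2 - 1 / 16 : ℝ)) : ℂ) * padeNum n := by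
        simp only [padeNum]; push_cast; ring
      rw [e]
      simp only [Complex.mul_im, Complex.add_re, Complex.add_im, Complex.mul_re,
        Complex.ofReal_re, Complex.ofReal_im, Complex.conj_re, Complex.conj_im]
      ring
    rw [h]
    refine mul_ne_zero (neg_ne_zero.mpr (ne_of_gt ?_)) ih
    nlinarith [n.cast_nonneg (α := ℝ)]

/-- The remainder terms of the Padé approximation to the fourth root, as functions of the angle. -/
noncomputable def padeRem : ℕ → ℝ → ℝ
  | 0, φ => -Real.sin (φ / 4)
  | 1, φ => Real.sin φ * Real.cos (φ / 4) / 4 - Real.cos φ * Real.sin (φ / 4)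
  | n + 2, φ => (2 * n + 3) * Real.cos φ * padeRem (n + 1) φ +
      ((n + 1) ^ 2 - 1 / 16) * Real.sin φ ^ 2 * padeRem n φ

lemma padeRem_add_two (n : ℕ) (φ : ℝ) : padeRem (n + 2) φ =
    (2 * n + 3) * Real.cos φ * padeRem (n + 1) φ +
      ((n + 1) ^ 2 - 1 / 16) * Real.sin φ ^ 2 * padeRem n φ := rfl

lemma hasDerivAt_padeRem_zero (φ : ℝ) :
    HasDerivAt (padeRem 0) (-(Real.cos (φ / 4) / 4)) φ := by
  have h : HasDerivAt (fun φ : ℝ => φ / 4) (1 / 4) φ := (hasDerivAt_id φ).div_const 4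
  exact h.sin.neg.congr_deriv (by ring)

lemma hasDerivAt_padeRem_add_two {n : ℕ} {φ d₀ d₁ : ℝ} (h₀ : HasDerivAt (padeRem n) d₀ φ)
    (h₁ : HasDerivAt (padeRem (n + 1)) d₁ φ) :
    HasDerivAt (padeRem (n + 2)) ((2 * n + 3) * (Real.cos φ * d₁ - Real.sin φ * padeRem (n + 1) φ) +
      ((n + 1) ^ 2 - 1 / 16) *
        (Real.sin φ ^ 2 * d₀ + 2 * Real.sin φ * Real.cos φ * padeRem n φ)) φ := by
  have h := (((Real.hasDerivAt_cos φ).const_mul (2 * (n : ℝ) + 3)).mul h₁).add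
    ((((Real.hasDerivAt_sin φ).pow 2).const_mul (((n : ℝ) + 1) ^ 2 - 1 / 16)).mul h₀)
  refine HasDerivAt.congr_deriv (f := padeRem (n + 2)) h ?_
  simp only [Pi.pow_apply]
  push_cast
  ring

lemma hasDerivAt_padeRem (n : ℕ) (φ : ℝ) : HasDerivAt (padeRem (n + 1))
    (-(((n : ℝ) + 1) ^ 2 - 1 / 16) * Real.sin φ * padeRem n φ) φ := by
  have h0 : HasDerivAt (padeRem 1)
      (-(((0 : ℕ) + 1 : ℝ) ^ 2 - 1 / 16) * Real.sin φ * padeRem 0 φ) φ := by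
    have h : HasDerivAt (fun φ : ℝ => φ / 4) (1 / 4) φ := (hasDerivAt_id φ).div_const 4
    refine ((((Real.hasDerivAt_sin φ).mul h.cos).div_const 4).sub
      ((Real.hasDerivAt_cos φ).mul h.sin)).congr_deriv ?_
    simp only [padeRem]
    push_cast
    ring
  induction n using Nat.twoStepInduction with
  | zero => exact h0
  | one =>
    refine (hasDerivAt_padeRem_add_two (hasDerivAt_padeRem_zero φ) h0).congr_deriv ?_
    simp only [padeRem]
    push_cast
    ring
  | more n ih0 ih1 =>
    refine (hasDerivAt_padeRem_add_two ih0 ih1).congr_deriv ?_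
    rw [show n + 1 + 1 = n + 2 from rfl, padeRem_add_two n]
    push_cast
    ring

lemma padeRem_sign (n : ℕ) : ∀ φ ∈ Set.Icc (0 : ℝ) (Real.pi / 2),
    0 ≤ (-1) ^ (n + 1) * padeRem n φ := by
  induction n with
  | zero =>
    intro φ hφ
    have := Real.sin_nonneg_of_nonneg_of_le_pi (x := φ / 4) (by linarith [hφ.1])
      (by linarith [hφ.2, Real.pi_pos])
    simpa [padeRem] using this
  | succ n ih =>
    have hd : ∀ φ, HasDerivAt (fun φ => (-1) ^ (n + 1 + 1) * padeRem (n + 1) φ)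
        ((-1) ^ (n + 1 + 1) * (-(((n : ℝ) + 1) ^ 2 - 1 / 16) * Real.sin φ * padeRem n φ)) φ :=
      fun φ => (hasDerivAt_padeRem n φ).const_mul _
    have hmono : MonotoneOn (fun φ => (-1) ^ (n + 1 + 1) * padeRem (n + 1) φ)
        (Set.Icc (0 : ℝ) (Real.pi / 2)) := by
      refine monotoneOn_of_deriv_nonneg (convex_Icc _ _)
        (fun φ _ => (hd φ).continuousAt.continuousWithinAt)
        (fun φ _ => (hd φ).differentiableAt.differentiableWithinAt) ?_
      intro φ hφ
      have hφ := interior_subset hφ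
      rw [(hd φ).deriv]
      have h1 := ih φ hφ
      have h2 := Real.sin_nonneg_of_nonneg_of_le_pi hφ.1 (by linarith [hφ.2, Real.pi_pos])
      have h3 : (0 : ℝ) ≤ ((n : ℝ) + 1) ^ 2 - 1 / 16 := by nlinarith [n.cast_nonneg (α := ℝ)]
      have := mul_nonneg (mul_nonneg h3 h2) h1
      calc (0 : ℝ) ≤ _ := this
        _ = _ := by ring
    have h0 : ∀ k, padeRem k 0 = 0 := by
      intro k
      induction k using Nat.twoStepInduction with
      | zero => simp [padeRem]
      | one => simp [padeRem]
      | more k ih0 ih1 => simp [padeRem, ih0, ih1]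
    intro φ hφ
    have := hmono ⟨le_rfl, by positivity⟩ hφ hφ.1
    simpa [h0] using this

/-- A unit fourth root of `239 - i`, up to scaling, together with the quality of its approximation
by the arguments of `padeNum n`. -/
lemma exists_fourth_root : ∃ l : ℂ, ∃ ρ : ℝ, ‖l‖ = 1 ∧ 0 < ρ ∧ ρ ^ 2 = 57122 ∧
    ρ * l ^ 4 = 239 - Complex.I ∧
    ∀ n, |(padeNum n * l).im| ≤ n.factorial / 478 ^ n / 239 := by
  set a : ℂ := 239 + Complex.I with ha
  set φ := a.arg
  have hcos : ‖a‖ * Real.cos φ = 239 := by rw [Complex.norm_mul_cos_arg]; simp [ha]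
  have hsin : ‖a‖ * Real.sin φ = 1 := by rw [Complex.norm_mul_sin_arg]; simp [ha]
  have hsq : ‖a‖ ^ 2 = 57122 := by
    linear_combination 239 * hcos + hsin + ‖a‖ * Real.cos φ * hcos + ‖a‖ * Real.sin φ * hsin -
      ‖a‖ ^ 2 * Real.sin_sq_add_cos_sq φ
  have hpos : 0 < ‖a‖ := norm_pos_iff.mpr fun h => by rw [h] at hsq; norm_num at hsq
  have h239 : 239 ≤ ‖a‖ := by nlinarith
  have hφm : φ ∈ Set.Icc (0 : ℝ) (Real.pi / 2) :=
    ⟨Complex.arg_nonneg_iff.mpr (by simp [ha]),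
      Complex.arg_le_pi_div_two_iff.mpr (Or.inl (by simp [ha]))⟩
  have hlre : (Complex.exp ((-(φ / 4) : ℝ) * Complex.I)).re = Real.cos (φ / 4) := by
    rw [Complex.exp_ofReal_mul_I_re, Real.cos_neg]
  have hlim : (Complex.exp ((-(φ / 4) : ℝ) * Complex.I)).im = -Real.sin (φ / 4) := by
    rw [Complex.exp_ofReal_mul_I_im, Real.sin_neg]
  refine ⟨Complex.exp ((-(φ / 4) : ℝ) * Complex.I), ‖a‖, Complex.norm_exp_ofReal_mul_I _, hpos, hsq,
    ?_, ?_⟩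
  · rw [← Complex.exp_nat_mul,
      show ((4 : ℕ) : ℂ) * ((-(φ / 4) : ℝ) * Complex.I) = ((-φ : ℝ) : ℂ) * Complex.I by
        push_cast; ring]
    apply Complex.ext
    · rw [Complex.re_ofReal_mul, Complex.exp_ofReal_mul_I_re, Real.cos_neg, hcos]; simp
    · rw [Complex.im_ofReal_mul, Complex.exp_ofReal_mul_I_im, Real.sin_neg, mul_neg, hsin]; simp
  set l := Complex.exp ((-(φ / 4) : ℝ) * Complex.I)
  have hrec : ∀ n, (padeNum (n + 2) * l).im = (2 * n + 3) * 239 * (padeNum (n + 1) * l).im +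
      ((n + 1) ^ 2 - 1 / 16) * (padeNum n * l).im := by
    intro n
    have e : padeNum (n + 2) * l = (((2 * n + 3) * 239 : ℝ) : ℂ) * (padeNum (n + 1) * l) +
        ((((n + 1) ^ 2 - 1 / 16 : ℝ)) : ℂ) * (padeNum n * l) := by
      simp only [padeNum]; push_cast; ring
    rw [e, Complex.add_im, Complex.im_ofReal_mul, Complex.im_ofReal_mul]
  have hrem : ∀ n, (padeNum n * l).im = ‖a‖ ^ n * padeRem n φ := by
    intro n
    induction n using Nat.twoStepInduction with
    | zero => simp [padeNum, padeRem, hlim]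
    | one =>
      simp only [padeNum, padeRem, Complex.mul_im, hlre, hlim]
      simp
      linear_combination Real.sin (φ / 4) * hcos - Real.cos (φ / 4) / 4 * hsin
    | more n ih0 ih1 =>
      rw [hrec, ih0, ih1, padeRem_add_two]
      linear_combination (-(2 * (n : ℝ) + 3) * ‖a‖ ^ (n + 1) * padeRem (n + 1) φ) * hcos -
        (((n : ℝ) + 1) ^ 2 - 1 / 16) * ‖a‖ ^ n * padeRem n φ * (‖a‖ * Real.sin φ + 1) * hsin
  have hsign : ∀ n, |(padeNum n * l).im| = (-1) ^ (n + 1) * (padeNum n * l).im := by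
    intro n
    have h : 0 ≤ (-1) ^ (n + 1) * (padeNum n * l).im := by
      rw [hrem, mul_left_comm]
      exact mul_nonneg (by positivity) (padeRem_sign n φ hφm)
    rw [← abs_of_nonneg h, abs_mul, abs_pow, abs_neg, abs_one, one_pow, one_mul]
  intro n
  induction n with
  | zero =>
    have h1 : Real.sin (φ / 4) ≤ Real.sin φ :=
      Real.sin_le_sin_of_le_of_le_pi_div_two (by linarith [hφm.1, Real.pi_pos]) hφm.2
        (by linarith [hφm.1])
    have h2 : Real.sin φ ≤ 1 / 239 := by rw [le_div_iff₀ (by norm_num)]; nlinarith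
    rw [hsign]
    simp [padeNum, hlim]
    linarith
  | succ n ih =>
    have h := hsign (n + 2)
    rw [hrec] at h
    have h0 := hsign n
    have h1 := hsign (n + 1)
    have hn : (0 : ℝ) ≤ n := n.cast_nonneg
    have e : |(padeNum (n + 2) * l).im| = (((n : ℝ) + 1) ^ 2 - 1 / 16) * |(padeNum n * l).im| -
        (2 * n + 3) * 239 * |(padeNum (n + 1) * l).im| := by
      rw [hrec, h, h0, h1]; ring
    have e' := abs_nonneg (padeNum (n + 2) * l).im
    have h2 : 478 * |(padeNum (n + 1) * l).im| ≤ (n + 1) * |(padeNum n * l).im| := by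
      have := abs_nonneg (padeNum (n + 1) * l).im
      have := abs_nonneg (padeNum n * l).im
      have : (n + 1) * (478 * |(padeNum (n + 1) * l).im|) ≤
        (n + 1) * ((n + 1) * |(padeNum n * l).im|) := by nlinarith
      exact le_of_mul_le_mul_left this (by positivity)
    have h3 : (n + 1) * |(padeNum n * l).im| ≤ (n + 1) * (n.factorial / 478 ^ n / 239) := by gcongr
    rw [Nat.factorial_succ, pow_succ]
    push_cast
    calc |(padeNum (n + 1) * l).im| ≤ ((n : ℝ) + 1) * (n.factorial / 478 ^ n / 239) / 478 := by
          rw [le_div_iff₀ (by norm_num)]; linarith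
      _ = _ := by field_simp

/-- A complex number whose fourth power is nearly real is close to one of the lines through `0`
making an angle with the axes that is a multiple of `π / 4`. -/
lemma exists_im_mul_small {v : ℂ} (hv : |(v ^ 4).im| ≤ 120) :
    ∃ ω : GaussianInt, ω ≠ 0 ∧ ‖(ω : ℂ)‖ ≤ 2 ∧ |((ω : ℂ) * v).im| * ‖v‖ ^ 3 ≤ 90 := by
  obtain ⟨p, q⟩ := v
  have him : ((⟨p, q⟩ : ℂ) ^ 4).im = 4 * (p * q * (p ^ 2 - q ^ 2)) := by
    simp [pow_succ]; ring
  have hN : ‖(⟨p, q⟩ : ℂ)‖ ^ 2 = p ^ 2 + q ^ 2 := by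
    rw [Complex.sq_norm, Complex.normSq_mk]; ring
  set V := ‖(⟨p, q⟩ : ℂ)‖
  have hV0 : 0 ≤ V := norm_nonneg _
  have hsq : (p * q) ^ 2 * (p ^ 2 - q ^ 2) ^ 2 ≤ 900 := by
    rw [him] at hv
    have := sq_le_sq' (abs_le.mp hv).1 (abs_le.mp hv).2
    nlinarith
  have fin : ∀ t : ℝ, t ^ 2 * (V ^ 2) ^ 3 ≤ 8100 → |t| * V ^ 3 ≤ 90 := by
    intro t ht
    refine abs_le_of_sq_le_sq' (b := 90) ?_ (by norm_num) |>.2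
    rw [mul_pow, sq_abs]; linarith
  have gen : ∀ ω : GaussianInt, ω ≠ 0 → ω.re ^ 2 + ω.im ^ 2 ≤ 4 →
      ((ω : ℂ) * ⟨p, q⟩).im ^ 2 * (p ^ 2 + q ^ 2) ^ 3 ≤ 8100 →
      ∃ ω : GaussianInt, ω ≠ 0 ∧ ‖(ω : ℂ)‖ ≤ 2 ∧ |((ω : ℂ) * ⟨p, q⟩).im| * V ^ 3 ≤ 90 := by
    intro ω h0 h1 h2
    refine ⟨ω, h0, ?_, fin _ (by rw [hN]; exact h2)⟩
    refine abs_le_of_sq_le_sq' (b := 2) ?_ (by norm_num) |>.2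
    rw [Complex.sq_norm, Complex.normSq_apply, ← GaussianInt.intCast_re, ← GaussianInt.intCast_im]
    have : ((ω.re ^ 2 + ω.im ^ 2 : ℤ) : ℝ) ≤ 4 := by exact_mod_cast h1
    push_cast at this
    linarith
  have hV4 : 4 * (p * q) ^ 2 + (p ^ 2 - q ^ 2) ^ 2 = (p ^ 2 + q ^ 2) ^ 2 := by ring
  have hW : 0 ≤ p ^ 2 + q ^ 2 := by positivity
  rcases le_total (4 * (p * q) ^ 2) ((p ^ 2 - q ^ 2) ^ 2) with h | h
  · have h1 : (p * q) ^ 2 * (p ^ 2 + q ^ 2) ^ 2 ≤ 1800 := by nlinarith [sq_nonneg (p * q)]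
    rcases le_total (q ^ 2) (p ^ 2) with h' | h'
    · refine gen 1 (by decide) (by decide) ?_
      simp
      have : 0 ≤ q ^ 2 * (p ^ 2 + q ^ 2) ^ 2 * (p ^ 2 - q ^ 2) :=
        mul_nonneg (by positivity) (by linarith)
      nlinarith
    · refine gen ⟨0, 1⟩ (by decide) (by decide) ?_
      simp [GaussianInt.toComplex_def']
      have : 0 ≤ p ^ 2 * (p ^ 2 + q ^ 2) ^ 2 * (q ^ 2 - p ^ 2) :=
        mul_nonneg (by positivity) (by linarith)
      nlinarith
  · have h1 : (p ^ 2 - q ^ 2) ^ 2 * (p ^ 2 + q ^ 2) ^ 2 ≤ 7200 := by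
      nlinarith [sq_nonneg (p ^ 2 - q ^ 2)]
    rcases le_total 0 (p * q) with h' | h'
    · refine gen ⟨1, -1⟩ (by decide) (by decide) ?_
      simp [GaussianInt.toComplex_def']
      have : 0 ≤ (q - p) ^ 2 * (p ^ 2 + q ^ 2) ^ 2 * (p * q) := mul_nonneg (by positivity) h'
      nlinarith
    · refine gen ⟨1, 1⟩ (by decide) (by decide) ?_
      simp [GaussianInt.toComplex_def']
      have : 0 ≤ (p + q) ^ 2 * (p ^ 2 + q ^ 2) ^ 2 * (-(p * q)) :=
        mul_nonneg (by positivity) (by linarith)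
      nlinarith

/-- The elementary optimisation over the order `n` of the approximation. -/
lemma le_of_forall_pade_bound {V : ℝ} (hV : 0 ≤ V)
    (h : ∀ n : ℕ, V ^ 3 ≤ 90 * 3832 ^ (n + 1) + V ^ 3 * (2 * V * ((4 / 239) ^ n / 239))) :
    4 * V ≤ 239 * (239 / 4) ^ 3 := by
  have hex : ∃ n : ℕ, 4 * V / 239 ≤ (239 / 4 : ℝ) ^ n :=
    (pow_unbounded_of_one_lt _ (by norm_num)).imp fun _ => le_of_lt
  obtain ⟨n, hn, hmin⟩ : ∃ n : ℕ, 4 * V / 239 ≤ (239 / 4 : ℝ) ^ n ∧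
      ∀ m < n, (239 / 4 : ℝ) ^ m < 4 * V / 239 :=
    ⟨Nat.find hex, Nat.find_spec hex, fun m hm => not_le.mp (Nat.find_min hex hm)⟩
  have hle : n ≤ 3 := by
    by_contra! hlt
    obtain ⟨m, rfl⟩ : ∃ m, n = m + 4 := ⟨n - 4, by omega⟩
    have h1 := hmin (m + 3) (by omega)
    have h2 : (239 / 4 : ℝ) ^ (m + 4) < V := by rw [pow_succ]; linarith
    have h3 : 2 * V * ((4 / 239) ^ (m + 4) / 239) ≤ 1 / 2 := by
      have hpos : (0 : ℝ) < (239 / 4) ^ (m + 4) := by positivity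
      have e : ((4 : ℝ) / 239) ^ (m + 4) = ((239 / 4) ^ (m + 4))⁻¹ := by
        rw [← inv_pow]; norm_num
      rw [e, mul_div_assoc', div_le_iff₀ (by norm_num), ← div_eq_mul_inv, div_le_iff₀ hpos]
      linarith
    have h4 : V ^ 3 ≤ 180 * 3832 ^ (m + 5) := by
      have := mul_le_mul_of_nonneg_left h3 (pow_nonneg hV 3)
      have := h (m + 4)
      linarith
    have h5 : ((239 / 4 : ℝ) ^ (m + 4)) ^ 3 < V ^ 3 := by gcongr
    have h6 : ((3832 : ℝ) * 55) ^ (m + 4) ≤ ((239 / 4 : ℝ) ^ (m + 4)) ^ 3 := by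
      rw [← pow_mul, mul_comm (m + 4) 3, pow_mul]
      exact pow_le_pow_left₀ (by norm_num) (by norm_num) _
    have h7 : (55 : ℝ) ^ 4 ≤ 55 ^ (m + 4) := pow_le_pow_right₀ (by norm_num) (by omega)
    have h8 : (0 : ℝ) < 3832 ^ (m + 4) := by positivity
    rw [mul_pow] at h6
    rw [pow_succ (3832 : ℝ) (m + 4)] at h4
    have h9 := mul_le_mul_of_nonneg_left h7 h8.le
    linarith
  have : (239 / 4 : ℝ) ^ n ≤ (239 / 4) ^ 3 := pow_le_pow_right₀ (by norm_num) hle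
  linarith

/-- The hypergeometric method bounds the solutions of the Thue equation of `exists_thue`. -/
lemma thue_lt {p q y : ℤ} (hpq : p ^ 2 + q ^ 2 = y) (hy : 0 < y)
    (hF : |p ^ 4 + 4 * p ^ 3 * q - 6 * p ^ 2 * q ^ 2 - 4 * p * q ^ 3 + q ^ 4| = 1) :
    y < 2 * 10 ^ 13 := by
  obtain ⟨l, ρ, hl, hρ, hρ2, hl4, hrem⟩ := exists_fourth_root
  obtain ⟨β, hβ⟩ : ∃ β : GaussianInt, β = ⟨p, q⟩ * ⟨3, -2⟩ := ⟨_, rfl⟩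
  obtain ⟨v, hv⟩ : ∃ v : ℂ, v = (β : ℂ) * l := ⟨_, rfl⟩
  have hβn : β.norm = 13 * y := by
    rw [hβ, Zsqrtd.norm_mul, Zsqrtd.norm_def, Zsqrtd.norm_def, ← hpq]; ring
  have hβ0 : β ≠ 0 := GaussianInt.norm_pos.mp (by rw [hβn]; positivity)
  have hV2 : ‖v‖ ^ 2 = 13 * y := by
    rw [hv, norm_mul, hl, mul_one, Complex.sq_norm, ← GaussianInt.intCast_real_norm, hβn]
    push_cast; ring
  have hv4 : |(v ^ 4).im| ≤ 120 := by
    have e : ρ * v ^ 4 = (β : ℂ) ^ 4 * (239 - Complex.I) := by rw [hv, mul_pow, ← hl4]; ring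
    have e' : (β : ℂ) ^ 4 * (239 - Complex.I) = ((β ^ 4 * ⟨239, -1⟩ : GaussianInt) : ℂ) := by
      rw [map_mul, map_pow, GaussianInt.toComplex_def' 239 (-1)]; push_cast; ring
    have h1 := congrArg Complex.im (e.trans e')
    rw [Complex.im_ofReal_mul, ← GaussianInt.intCast_im] at h1
    have h2 : (β ^ 4 * ⟨239, -1⟩ : GaussianInt).im = -28561 *
        (p ^ 4 + 4 * p ^ 3 * q - 6 * p ^ 2 * q ^ 2 - 4 * p * q ^ 3 + q ^ 4) := by
      simp [hβ, pow_succ]; ring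
    have h3 : |ρ * (v ^ 4).im| = 28561 := by
      rw [h1, h2, ← Int.cast_abs, abs_mul, hF]; norm_num
    rw [abs_mul, abs_of_pos hρ] at h3
    have : 239 ≤ ρ := by nlinarith
    nlinarith [abs_nonneg (v ^ 4).im]
  obtain ⟨ω, hω0, hω2, hωv⟩ := exists_im_mul_small hv4
  choose w hw using padeNum_integral
  have hwr : ∀ n, (w n : ℂ) = ((8 ^ n / n.factorial : ℝ) : ℂ) * padeNum n := by
    intro n; rw [hw]; push_cast; ring
  have hfac : ∀ n : ℕ, (0 : ℝ) < n.factorial := fun n => by exact_mod_cast n.factorial_pos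
  have hwn : ∀ n, ‖(w n : ℂ)‖ ≤ 3832 ^ n := by
    intro n
    have := hfac n
    rw [hwr, norm_mul, Complex.norm_real, Real.norm_of_nonneg (by positivity)]
    calc _ ≤ (8 ^ n / n.factorial : ℝ) * (n.factorial * 479 ^ n) := by
          gcongr; exact norm_padeNum_le n
      _ = (8 * 479) ^ n := by rw [mul_pow]; field_simp
      _ = 3832 ^ n := by norm_num
  have hwl : ∀ n, |((w n : ℂ) * l).im| ≤ (4 / 239) ^ n / 239 := by
    intro n
    have := hfac n
    rw [hwr, mul_assoc, Complex.im_ofReal_mul, abs_mul, abs_of_pos (by positivity)]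
    calc _ ≤ (8 ^ n / n.factorial : ℝ) * (n.factorial / 478 ^ n / 239) := by
          gcongr; exact hrem n
      _ = (8 / 478) ^ n / 239 := by rw [div_pow]; field_simp
      _ = (4 / 239) ^ n / 239 := by norm_num
  have hbound : ∀ n, (ω * β * star (w n)).im ≠ 0 →
      ‖v‖ ^ 3 ≤ 90 * 3832 ^ n + ‖v‖ ^ 3 * (2 * ‖v‖ * ((4 / 239) ^ n / 239)) := by
    intro n hne
    have h1 : (1 : ℝ) ≤ |((ω * β * star (w n)).im : ℝ)| := by
      exact_mod_cast Int.one_le_abs hne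
    have hll : l * (starRingEnd ℂ) l = 1 := by
      rw [Complex.mul_conj, Complex.normSq_eq_norm_sq, hl]; norm_num
    have e : ((ω * β * star (w n) : GaussianInt) : ℂ) =
        ((ω : ℂ) * v) * (starRingEnd ℂ) ((w n : ℂ) * l) := by
      rw [map_mul, map_mul, GaussianInt.toComplex_star, map_mul (starRingEnd ℂ), hv]
      linear_combination (-(ω : ℂ) * β * (starRingEnd ℂ) (w n : ℂ)) * hll
    have h2 : |((ω * β * star (w n)).im : ℝ)| ≤
        |((ω : ℂ) * v).im| * 3832 ^ n + 2 * ‖v‖ * ((4 / 239) ^ n / 239) := by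
      rw [GaussianInt.intCast_im, e, Complex.mul_im, Complex.conj_re, Complex.conj_im]
      refine (abs_add_le _ _).trans ?_
      rw [abs_mul, abs_mul, abs_neg, add_comm]
      have i1 : |((w n : ℂ) * l).re| ≤ 3832 ^ n :=
        (Complex.abs_re_le_norm _).trans (by rw [norm_mul, hl, mul_one]; exact hwn n)
      have i2 : |((ω : ℂ) * v).re| ≤ 2 * ‖v‖ :=
        (Complex.abs_re_le_norm _).trans (by rw [norm_mul]; gcongr)
      gcongr
      exact hwl n
    have h3 : 0 ≤ ‖v‖ ^ 3 := by positivity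
    calc ‖v‖ ^ 3 ≤ ‖v‖ ^ 3 * (|((ω : ℂ) * v).im| * 3832 ^ n + 2 * ‖v‖ * ((4 / 239) ^ n / 239)) :=
          le_mul_of_one_le_right h3 (h1.trans h2)
      _ = |((ω : ℂ) * v).im| * ‖v‖ ^ 3 * 3832 ^ n +
          ‖v‖ ^ 3 * (2 * ‖v‖ * ((4 / 239) ^ n / 239)) := by ring
      _ ≤ _ := by gcongr
  have hne : ∀ n, (ω * β * star (w n)).im ≠ 0 ∨ (ω * β * star (w (n + 1))).im ≠ 0 := by
    intro n
    by_contra! hzero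
    have hdet : (w (n + 1) * star (w n)).im ≠ 0 := by
      have e : ((w (n + 1) * star (w n) : GaussianInt) : ℂ) =
          ((8 ^ (n + 1) / (n + 1).factorial * (8 ^ n / n.factorial) : ℝ) : ℂ) *
            (padeNum (n + 1) * (starRingEnd ℂ) (padeNum n)) := by
        rw [map_mul, GaussianInt.toComplex_star, hwr, hwr, map_mul, Complex.conj_ofReal]
        push_cast; ring
      intro h0
      have h1 := GaussianInt.intCast_im (w (n + 1) * star (w n))
      rw [h0, e, Complex.im_ofReal_mul, Int.cast_zero] at h1
      have := hfac n
      have := hfac (n + 1)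
      exact mul_ne_zero (by positivity) (im_padeNum_succ_mul_conj_ne_zero n) h1.symm
    have hid : (ω * β).norm * (w (n + 1) * star (w n)).im = 0 := by
      have : (ω * β).norm * (w (n + 1) * star (w n)).im =
          (ω * β * star (w n)).im * (ω * β * star (w (n + 1))).re -
          (ω * β * star (w n)).re * (ω * β * star (w (n + 1))).im := by
        generalize ω * β = γ
        rw [Zsqrtd.norm_def]
        simp
        ring
      rw [this, hzero.1, hzero.2]; ring
    exact mul_ne_zero (GaussianInt.norm_pos.mpr (mul_ne_zero hω0 hβ0)).ne' hdet hid
  have hfin := le_of_forall_pade_bound (norm_nonneg v) fun n => by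
    rcases hne n with h | h
    · refine (hbound n h).trans ?_
      gcongr
      · norm_num
      · omega
    · refine (hbound (n + 1) h).trans ?_
      have h4 : (4 / 239 : ℝ) ^ (n + 1) ≤ (4 / 239) ^ n :=
        pow_le_pow_of_le_one (by norm_num) (by norm_num) (by omega)
      have h5 : 2 * ‖v‖ * ((4 / 239) ^ (n + 1) / 239) ≤ 2 * ‖v‖ * ((4 / 239) ^ n / 239) :=
        mul_le_mul_of_nonneg_left (by linarith) (by positivity)
      have := mul_le_mul_of_nonneg_left h5 (pow_nonneg (norm_nonneg v) 3)
      linarith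
  have hlt : (y : ℝ) < 2 * 10 ^ 13 := by
    have := norm_nonneg v
    norm_num at hfin ⊢
    nlinarith
  exact_mod_cast hlt

theorem stmt_0 (x y : ℤ) (hx : 0 < x) (hy : 0 < y) :
    x ^ 2 = 2 * y ^ 4 - 1 ↔ (x = 1 ∧ y = 1) ∨ (x = 239 ∧ y = 13) := by
  constructor
  · intro h
    obtain ⟨p, q, hpq, hF⟩ := exists_thue hy h
    exact eq_of_lt hx hy (thue_lt hpq hy hF) h
  · rintro (⟨rfl, rfl⟩ | ⟨rfl, rfl⟩) <;> norm_num
end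

section
/- Let (xₙ) and (tₙ) be the integer sequences with x₀ = 1, t₀ = 1 and xₙ₊₁ = 3xₙ + 4tₙ, tₙ₊₁ = 2xₙ + 3tₙ. Then every pair of positive integers (x, t) satisfying x² − 2t² + 1 = 0 is equal to (xₙ, tₙ) for some natural number n. -/
/-- One descent step for `a ^ 2 - 2 * b ^ 2 + 1 = 0`: the inverse of
`(a, b) ↦ (3 * a + 4 * b, 2 * a + 3 * b)` sends a positive solution with `1 < b` to a positive
solution with smaller second coordinate. -/
theorem negPell_two_descent {a b : ℤ} (ha : 0 < a) (hb : 1 < b)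
    (h : a ^ 2 - 2 * b ^ 2 + 1 = 0) :
    0 < 3 * a - 4 * b ∧ 0 < 3 * b - 2 * a ∧ 3 * b - 2 * a < b ∧
      (3 * a - 4 * b) ^ 2 - 2 * (3 * b - 2 * a) ^ 2 + 1 = 0 := by
  have hb3 : 3 ≤ b := by
    by_contra! hlt
    obtain rfl : b = 2 := by omega
    have : a < 3 := by nlinarith
    interval_cases a <;> omega
  refine ⟨?_, ?_, ?_, by linear_combination h⟩
  · by_contra! hle
    nlinarith
  · by_contra! hle
    nlinarith
  · by_contra! hle
    nlinarith

theorem stmt_2 (x t : ℕ → ℤ) (hx0 : x 0 = 1) (ht0 : t 0 = 1)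
    (hx : ∀ n, x (n + 1) = 3 * x n + 4 * t n)
    (ht : ∀ n, t (n + 1) = 2 * x n + 3 * t n) :
    ∀ a b : ℤ, 0 < a → 0 < b → a ^ 2 - 2 * b ^ 2 + 1 = 0 →
      ∃ n : ℕ, a = x n ∧ b = t n := by
  intro a b ha hb h
  induction hk : b.toNat using Nat.strong_induction_on generalizing a b with
  | _ k ih =>
    rcases (show 1 ≤ b from hb).eq_or_lt with rfl | hb1
    · exact ⟨0, by rw [hx0]; nlinarith, ht0.symm⟩
    · obtain ⟨ha', hb', hlt, h'⟩ := negPell_two_descent ha hb1 h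
      obtain ⟨n, hxn, htn⟩ := ih _ (by omega) _ _ ha' hb' h' rfl
      exact ⟨n + 1, by rw [hx, ← hxn, ← htn]; ring, by rw [ht, ← hxn, ← htn]; ring⟩
end
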